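/- Let Σ be a well-posed system on X with K-bounded right-hand side f with respect to a nonempty closed set A ⊆ X. If there exists a finite-step ISS Lyapunov function for Σ with respect to A, then Σ is ISS with respect to A. -/

import Mathlib

noncomputable section

/-- Class `K` comparison functions on `[0,∞)`. -/
def ClassK (γ : ℝ → ℝ) : Prop :=
  ContinuousOn γ (Set.Ici 0) ∧ StrictMonoOn γ (Set.Ici 0) ∧ γ 0 = 0

/-- Class `K∞` comparison functions: class `K` and unbounded. -/
def ClassKinf (γ : ℝ → ℝ) : Prop :=
  ClassK γ ∧ ∀ c : ℝ, ∃ s : ℝ, 0 ≤ s ∧ c < γ s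

/-- Class `KL` comparison functions. -/
def ClassKL (β : ℝ → ℝ → ℝ) : Prop :=
  ContinuousOn (fun p : ℝ × ℝ => β p.1 p.2) (Set.Ici 0 ×ˢ Set.Ici 0) ∧
    (∀ t : ℝ, 0 ≤ t → ClassK fun r => β r t) ∧
    (∀ r : ℝ, 0 < r → StrictAntiOn (β r) (Set.Ici 0) ∧
      Filter.Tendsto (fun t => β r t) Filter.atTop (nhds 0))

section System

variable {E : ℕ → Type*} [∀ i, NormedAddCommGroup (E i)]
variable {P : ℕ → Type*} [∀ i, NormedAddCommGroup (P i)]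

/-- Solution of the discrete-time system `x⁺ = F(x,u)` on `X = ℓ∞(ℕ,(n_i))`. -/
def traj (F : lp E ⊤ → lp P ⊤ → lp E ⊤) (ξ : lp E ⊤) (u : ℕ → lp P ⊤) : ℕ → lp E ⊤
  | 0 => ξ
  | k + 1 => F (traj F ξ u k) (u k)

/-- Admissible external inputs: uniformly bounded sequences in `U`. -/
def AdmInput (u : ℕ → lp P ⊤) : Prop :=
  ∃ C : ℝ, ∀ k, ‖u k‖ ≤ C

/-- `‖u‖_∞ = sup_k |u(k)|_∞`. -/
def inputNorm (u : ℕ → lp P ⊤) : ℝ :=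
  ⨆ k, ‖u k‖

/-- `Σ` is input-to-state stable with respect to the set `A`. -/
def ISS (F : lp E ⊤ → lp P ⊤ → lp E ⊤) (A : Set (lp E ⊤)) : Prop :=
  ∃ β γ : _, ClassKL β ∧ ClassK γ ∧
    ∀ (ξ : lp E ⊤) (u : ℕ → lp P ⊤), AdmInput u →
      ∀ k : ℕ, Metric.infDist (traj F ξ u k) A ≤
        max (β (Metric.infDist ξ A) (k : ℝ)) (γ (inputNorm u))

/-- `Σ` is exponentially input-to-state stable with respect to the set `A`. -/
def eISS (F : lp E ⊤ → lp P ⊤ → lp E ⊤) (A : Set (lp E ⊤)) : Prop :=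
  ∃ C ρ : ℝ, ∃ γ : ℝ → ℝ, 1 ≤ C ∧ 0 ≤ ρ ∧ ρ < 1 ∧ ClassK γ ∧
    ∀ (ξ : lp E ⊤) (u : ℕ → lp P ⊤), AdmInput u →
      ∀ k : ℕ, Metric.infDist (traj F ξ u k) A ≤
        max (C * ρ ^ k * Metric.infDist ξ A) (γ (inputNorm u))

/-- `f` is `K`-bounded with respect to `A`. -/
def KBounded (F : lp E ⊤ → lp P ⊤ → lp E ⊤) (A : Set (lp E ⊤)) : Prop :=
  ∃ κ₁ κ₂ : ℝ → ℝ, ClassK κ₁ ∧ ClassK κ₂ ∧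
    ∀ (ξ : lp E ⊤) (μ : lp P ⊤),
      Metric.infDist (F ξ μ) A ≤ κ₁ (Metric.infDist ξ A) + κ₂ ‖μ‖

theorem hK_nonneg {γ : ℝ → ℝ} (h : ClassK γ) {x : ℝ} (hx : 0 ≤ x) : 0 ≤ γ x := by
  have := h.2.1.monotoneOn (Set.mem_Ici.2 le_rfl) (Set.mem_Ici.2 hx) hx
  rw [h.2.2] at this; exact this

theorem hK_mono {γ : ℝ → ℝ} (h : ClassK γ) {x y : ℝ} (hx : 0 ≤ x) (hxy : x ≤ y) : γ x ≤ γ y :=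
  h.2.1.monotoneOn (Set.mem_Ici.2 hx) (Set.mem_Ici.2 (hx.trans hxy)) hxy

theorem hK_maps {γ : ℝ → ℝ} (h : ClassK γ) : Set.MapsTo γ (Set.Ici 0) (Set.Ici 0) :=
  fun _ hx => hK_nonneg h hx

theorem hK_comp {f g : ℝ → ℝ} (hf : ClassK f) (hg : ClassK g) : ClassK (fun x => f (g x)) :=
  ⟨hf.1.comp hg.1 (hK_maps hg), hf.2.1.comp hg.2.1 (hK_maps hg), by simp [hf.2.2, hg.2.2]⟩

theorem hK_add {f g : ℝ → ℝ} (hf : ClassK f) (hg : ClassK g) : ClassK (fun x => f x + g x) :=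
  ⟨hf.1.add hg.1, fun _ hx _ hy hxy => add_lt_add (hf.2.1 hx hy hxy) (hg.2.1 hx hy hxy),
    by simp [hf.2.2, hg.2.2]⟩

theorem hK_two {f : ℝ → ℝ} (hf : ClassK f) : ClassK (fun x => 2 * f x) :=
  ⟨continuousOn_const.mul hf.1,
    fun _ hx _ hy hxy => mul_lt_mul_of_pos_left (hf.2.1 hx hy hxy) two_pos, by simp [hf.2.2]⟩

theorem hK_id : ClassK (fun x => x) := ⟨continuousOn_id, fun _ _ _ _ h => h, rfl⟩

theorem hK_iso (e : ℝ ≃o ℝ) (h0 : e 0 = 0) : ClassK e :=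
  ⟨e.continuous.continuousOn, e.strictMono.strictMonoOn _, h0⟩

theorem hKinf_iso {a : ℝ → ℝ} (h : ClassKinf a) : ∃ e : ℝ ≃o ℝ, ∀ s, 0 ≤ s → e s = a s := by
  classical
  let g : ℝ → ℝ := fun x => if 0 ≤ x then a x else x
  have hg : StrictMono g := by
    intro x y hxy
    simp only [g]
    split_ifs with h1 h2 h2
    · exact h.1.2.1 h1 h2 hxy
    · exact absurd (h1.trans hxy.le) h2
    · exact (not_le.1 h1).trans_le (hK_nonneg h.1 h2)
    · exact hxy
  have hs : Function.Surjective g := by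
    intro y
    by_cases hy : 0 ≤ y
    · obtain ⟨s, hs, hys⟩ := h.2 y
      have := intermediate_value_Icc hs (h.1.1.mono Set.Icc_subset_Ici_self)
      obtain ⟨x, hx, hxy⟩ := this ⟨by rw [h.1.2.2]; exact hy, hys.le⟩
      exact ⟨x, by simp only [g, if_pos hx.1]; exact hxy⟩
    · exact ⟨y, by simp only [g, if_neg hy]⟩
  exact ⟨hg.orderIsoOfSurjective g hs, fun s hs' => by simp [g, hs']⟩

/-- linear interpolation of iterates -/
def hB (e : ℝ ≃o ℝ) (s t : ℝ) : ℝ :=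
  (1 - (t - ⌊t⌋₊)) * e^[⌊t⌋₊] s + (t - ⌊t⌋₊) * e^[⌊t⌋₊ + 1] s

theorem hB_on (e : ℝ ≃o ℝ) (s t : ℝ) (n : ℕ) (h1 : (n : ℝ) ≤ t) (h2 : t ≤ n + 1) :
    hB e s t = (1 - (t - n)) * e^[n] s + (t - n) * e^[n + 1] s := by
  rcases h2.lt_or_eq with h2 | h2
  · have : ⌊t⌋₊ = n := (Nat.floor_eq_iff ((Nat.cast_nonneg n).trans h1)).2 ⟨h1, h2⟩
    rw [hB, this]
  · have : ⌊t⌋₊ = n + 1 := by rw [h2]; exact_mod_cast Nat.floor_natCast (n + 1)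
    rw [hB, this, h2]; push_cast; ring

theorem hB_cont (e : ℝ ≃o ℝ) : Continuous (fun p : ℝ × ℝ => hB e p.1 p.2) := by
  have hit : ∀ n, Continuous (e^[n]) := fun n => e.continuous.iterate n
  have hP : ∀ n : ℕ, Continuous (fun p : ℝ × ℝ =>
      (1 - (p.2 - n)) * e^[n] p.1 + (p.2 - n) * e^[n + 1] p.1) := by
    intro n
    have h1 := (hit n).comp (continuous_fst (X := ℝ) (Y := ℝ))
    have h2 := (hit (n + 1)).comp (continuous_fst (X := ℝ) (Y := ℝ))
    exact ((continuous_const.sub (continuous_snd.sub continuous_const)).mul h1).add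
      ((continuous_snd.sub continuous_const).mul h2)
  have key : ∀ N : ℕ, ContinuousOn (fun p : ℝ × ℝ => hB e p.1 p.2) {p | p.2 ≤ N} := by
    intro N
    induction N with
    | zero =>
      refine (hP 0).continuousOn.congr ?_
      intro p hp
      have : ⌊p.2⌋₊ = 0 := Nat.floor_of_nonpos (by simpa using hp)
      simp only [hB, this]
    | succ N ih =>
      have hc : ContinuousOn (fun p : ℝ × ℝ => hB e p.1 p.2) {p | (N : ℝ) ≤ p.2 ∧ p.2 ≤ N + 1} :=
        (hP N).continuousOn.congr (fun p hp => hB_on e p.1 p.2 N hp.1 hp.2)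
      have := ih.union_of_isClosed hc (isClosed_le continuous_snd continuous_const)
        ((isClosed_le continuous_const continuous_snd).inter
          (isClosed_le continuous_snd continuous_const))
      refine this.mono ?_
      intro p hp
      simp only [Set.mem_setOf_eq, Nat.cast_add, Nat.cast_one] at hp
      rcases le_total p.2 N with h | h
      · exact Or.inl h
      · exact Or.inr ⟨h, hp⟩
  rw [continuous_iff_continuousAt]
  intro p
  obtain ⟨N, hN⟩ := exists_nat_gt p.2
  refine (key N).continuousAt ?_
  exact Filter.mem_of_superset ((isOpen_lt continuous_snd continuous_const).mem_nhds hN)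
    (fun q (hq : q.2 < N) => hq.le)

section hBsec
variable (e : ℝ ≃o ℝ) (h0 : e 0 = 0) (hlt : ∀ s, 0 < s → e s < s)

theorem it_zero (h0 : e 0 = 0) (n : ℕ) : e^[n] 0 = 0 := Function.iterate_fixed h0 n

theorem it_mono (n : ℕ) : StrictMono (e^[n]) := e.strictMono.iterate n

theorem it_pos (h0 : e 0 = 0) (n : ℕ) {s : ℝ} (hs : 0 < s) : 0 < e^[n] s := by
  have := it_mono e n hs; rwa [it_zero e h0] at this

theorem it_anti (h0 : e 0 = 0) (hlt : ∀ s, 0 < s → e s < s) {s : ℝ} (hs : 0 < s) :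
    StrictAnti (fun n : ℕ => e^[n] s) := by
  refine strictAnti_nat_of_succ_lt fun n => ?_
  rw [Function.iterate_succ_apply']
  exact hlt _ (it_pos e h0 n hs)

theorem it_tend (h0 : e 0 = 0) (hlt : ∀ s, 0 < s → e s < s) {s : ℝ} (hs : 0 < s) :
    Filter.Tendsto (fun n : ℕ => e^[n] s) Filter.atTop (nhds 0) := by
  have hb : BddBelow (Set.range (fun n : ℕ => e^[n] s)) :=
    ⟨0, by rintro _ ⟨n, rfl⟩; exact (it_pos e h0 n hs).le⟩
  have ht := tendsto_atTop_ciInf (it_anti e h0 hlt hs).antitone hb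
  have hfix := isFixedPt_of_tendsto_iterate ht e.continuous.continuousAt
  have hnn : 0 ≤ ⨅ n : ℕ, e^[n] s := le_ciInf fun n => (it_pos e h0 n hs).le
  rcases hnn.lt_or_eq with h | h
  · exact absurd hfix (hlt _ h).ne
  · rw [← h] at ht; exact ht

theorem fl_bd {t : ℝ} (ht : 0 ≤ t) : 0 ≤ t - ⌊t⌋₊ ∧ t - ⌊t⌋₊ < 1 :=
  ⟨sub_nonneg.2 (Nat.floor_le ht), by linarith [Nat.lt_floor_add_one t]⟩

theorem hB_le (h0 : e 0 = 0) (hlt : ∀ s, 0 < s → e s < s) {s t : ℝ} (hs : 0 < s) (ht : 0 ≤ t) :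
    hB e s t ≤ e^[⌊t⌋₊] s := by
  have h := it_anti e h0 hlt hs (Nat.lt_succ_self ⌊t⌋₊)
  have := fl_bd ht
  simp only [Nat.succ_eq_add_one] at h
  unfold hB
  nlinarith [mul_nonneg this.1 (sub_pos.2 h).le]

theorem hB_gt (h0 : e 0 = 0) (hlt : ∀ s, 0 < s → e s < s) {s t : ℝ} (hs : 0 < s) (ht : 0 ≤ t) :
    e^[⌊t⌋₊ + 1] s < hB e s t := by
  have h := it_anti e h0 hlt hs (Nat.lt_succ_self ⌊t⌋₊)
  have := fl_bd ht
  simp only [Nat.succ_eq_add_one] at h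
  unfold hB
  nlinarith [mul_pos (sub_pos.2 this.2) (sub_pos.2 h)]

theorem hB_zero (h0 : e 0 = 0) (t : ℝ) : hB e 0 t = 0 := by
  simp only [hB, it_zero e h0]; simp

theorem hB_mono {t : ℝ} (ht : 0 ≤ t) : StrictMono (fun s => hB e s t) := by
  intro x y hxy
  have := fl_bd ht
  have h1 := it_mono e ⌊t⌋₊ hxy
  have h2 := it_mono e (⌊t⌋₊ + 1) hxy
  simp only [hB]
  exact add_lt_add_of_lt_of_le (mul_lt_mul_of_pos_left h1 (by linarith))
    (mul_le_mul_of_nonneg_left h2.le this.1)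

theorem hB_nonneg (h0 : e 0 = 0) {s t : ℝ} (hs : 0 ≤ s) (ht : 0 ≤ t) : 0 ≤ hB e s t := by
  have := (hB_mono e ht).monotone hs
  simpa [hB_zero e h0] using this

theorem hB_anti (h0 : e 0 = 0) (hlt : ∀ s, 0 < s → e s < s) {s : ℝ} (hs : 0 < s) :
    StrictAntiOn (hB e s) (Set.Ici 0) := by
  intro a ha b hb hab
  have ha' : 0 ≤ a := ha
  have hb' : 0 ≤ b := hb
  rcases (Nat.floor_mono hab.le).lt_or_eq with h | h
  · calc hB e s b ≤ e^[⌊b⌋₊] s := hB_le e h0 hlt hs hb'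
      _ ≤ e^[⌊a⌋₊ + 1] s := (it_anti e h0 hlt hs).antitone h
      _ < _ := hB_gt e h0 hlt hs ha'
  · have h1 := it_anti e h0 hlt hs (Nat.lt_succ_self ⌊b⌋₊)
    simp only [Nat.succ_eq_add_one] at h1
    unfold hB
    rw [h]
    nlinarith [mul_pos (sub_pos.2 hab) (sub_pos.2 h1)]

theorem hB_tend (h0 : e 0 = 0) (hlt : ∀ s, 0 < s → e s < s) {s : ℝ} (hs : 0 < s) :
    Filter.Tendsto (hB e s) Filter.atTop (nhds 0) := by
  have h := (it_tend e h0 hlt hs).comp (tendsto_nat_floor_atTop (α := ℝ))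
  refine tendsto_of_tendsto_of_tendsto_of_le_of_le' tendsto_const_nhds h ?_ ?_
  · filter_upwards [Filter.eventually_ge_atTop 0] with t ht
    exact hB_nonneg e h0 hs.le ht
  · filter_upwards [Filter.eventually_ge_atTop 0] with t ht
    exact hB_le e h0 hlt hs ht

theorem hKL (h0 : e 0 = 0) (hlt : ∀ s, 0 < s → e s < s) {G w : ℝ → ℝ} (hG : ClassK G)
    (hw : ClassK w) {c : ℝ} (hc : 0 < c) : ClassKL (fun r t => G (hB e (w r) (t / c))) := by
  have hmaps : ∀ p : ℝ × ℝ, p ∈ Set.Ici (0:ℝ) ×ˢ Set.Ici (0:ℝ) →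
      hB e (w p.1) (p.2 / c) ∈ Set.Ici (0:ℝ) := fun p hp =>
    hB_nonneg e h0 (hK_nonneg hw hp.1) (div_nonneg hp.2 hc.le)
  refine ⟨?_, ?_, ?_⟩
  · refine hG.1.comp (t := Set.Ici 0) (f := fun p : ℝ × ℝ => hB e (w p.1) (p.2 / c)) ?_ hmaps
    refine (hB_cont e).comp_continuousOn (f := fun p : ℝ × ℝ => (w p.1, p.2 / c)) ?_
    exact (hw.1.comp continuousOn_fst (fun p hp => hp.1)).prodMk
      (continuousOn_snd.div_const c)
  · intro t ht
    have htc := div_nonneg ht hc.le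
    refine hK_comp (g := fun r => hB e (w r) (t / c)) hG ⟨?_, ?_, ?_⟩
    · exact (hB_cont e).comp_continuousOn (f := fun r : ℝ => (w r, t / c))
        (hw.1.prodMk continuousOn_const)
    · intro x hx y hy hxy
      exact hB_mono e htc (hw.2.1 hx hy hxy)
    · simp [hw.2.2, hB_zero e h0]
  · intro r hr
    have hwr : 0 < w r := by
      have := hw.2.1 (Set.mem_Ici.2 le_rfl) (Set.mem_Ici.2 hr.le) hr
      rwa [hw.2.2] at this
    constructor
    · intro a ha b hb hab
      have ha' := div_nonneg (Set.mem_Ici.1 ha) hc.le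
      have hb' := div_nonneg (Set.mem_Ici.1 hb) hc.le
      exact hG.2.1 (hB_nonneg e h0 hwr.le hb') (hB_nonneg e h0 hwr.le ha')
        (hB_anti e h0 hlt hwr ha' hb' (div_lt_div_of_pos_right hab hc))
    · have h1 : Filter.Tendsto (fun t => hB e (w r) (t / c)) Filter.atTop
          (nhdsWithin 0 (Set.Ici 0)) := by
        refine tendsto_nhdsWithin_iff.2 ⟨(hB_tend e h0 hlt hwr).comp
          (Filter.tendsto_id.atTop_div_const hc), ?_⟩
        filter_upwards [Filter.eventually_ge_atTop 0] with t ht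
        exact hB_nonneg e h0 hwr.le (div_nonneg ht hc.le)
      have h2 := (hG.1 0 (Set.mem_Ici.2 le_rfl)).tendsto.comp h1
      rw [hG.2.2] at h2
      exact h2

end hBsec

section TrajSec

theorem traj_add' (F : lp E ⊤ → lp P ⊤ → lp E ⊤) (ξ : lp E ⊤) (u : ℕ → lp P ⊤) (a b : ℕ) :
    traj F ξ u (a + b) = traj F (traj F ξ u a) (fun i => u (a + i)) b := by
  induction b with
  | zero => rfl
  | succ b ih => rw [← add_assoc]; simp only [traj, ih]

theorem norm_le_input {u : ℕ → lp P ⊤} (hu : AdmInput u) (k : ℕ) : ‖u k‖ ≤ inputNorm u := by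
  obtain ⟨C, hC⟩ := hu
  exact le_ciSup (f := fun k => ‖u k‖) ⟨C, by rintro _ ⟨n, rfl⟩; exact hC n⟩ k

theorem input_nonneg (u : ℕ → lp P ⊤) : 0 ≤ inputNorm u :=
  Real.iSup_nonneg fun _ => norm_nonneg _

theorem adm_shift {u : ℕ → lp P ⊤} (hu : AdmInput u) (a : ℕ) :
    AdmInput (fun i => u (a + i)) := hu.imp fun _ hC k => hC (a + k)

theorem input_shift {u : ℕ → lp P ⊤} (hu : AdmInput u) (a : ℕ) :
    inputNorm (fun i => u (a + i)) ≤ inputNorm u :=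
  ciSup_le fun k => norm_le_input hu (a + k)

theorem short_bd (F : lp E ⊤ → lp P ⊤ → lp E ⊤) (A : Set (lp E ⊤)) (hKb : KBounded F A) (n : ℕ) :
    ∃ φ ψ : ℝ → ℝ, ClassK φ ∧ ClassK ψ ∧ ∀ (ξ : lp E ⊤) (u : ℕ → lp P ⊤), AdmInput u →
      ∀ j, j ≤ n → Metric.infDist (traj F ξ u j) A ≤ φ (Metric.infDist ξ A) + ψ (inputNorm u) := by
  obtain ⟨κ₁, κ₂, h1, h2, hF⟩ := hKb
  induction n with
  | zero =>
    refine ⟨_, _, hK_id, hK_id, fun ξ u hu j hj => ?_⟩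
    obtain rfl : j = 0 := by omega
    have := input_nonneg u
    simp only [traj]; linarith
  | succ n ih =>
    obtain ⟨φ, ψ, hφ, hψ, h⟩ := ih
    refine ⟨_, _, hK_add hφ (hK_comp h1 (hK_two hφ)),
      hK_add (hK_add hψ (hK_comp h1 (hK_two hψ))) h2, fun ξ u hu j hj => ?_⟩
    have a0 : 0 ≤ φ (Metric.infDist ξ A) := hK_nonneg hφ Metric.infDist_nonneg
    have b0 : 0 ≤ ψ (inputNorm u) := hK_nonneg hψ (input_nonneg u)
    have c0 := hK_nonneg h2 (input_nonneg u)
    have d1 := hK_nonneg h1 (mul_nonneg zero_le_two a0)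
    have d2 := hK_nonneg h1 (mul_nonneg zero_le_two b0)
    rcases Nat.lt_or_ge n j with hj' | hj'
    · obtain rfl : j = n + 1 := by omega
      have e1 := hF (traj F ξ u n) (u n)
      have e2 := h ξ u hu n le_rfl
      have e3 := hK_mono h2 (norm_nonneg _) (norm_le_input hu n)
      have e4 := hK_mono h1 Metric.infDist_nonneg e2
      have e5 : κ₁ (φ (Metric.infDist ξ A) + ψ (inputNorm u)) ≤
          κ₁ (2 * φ (Metric.infDist ξ A)) + κ₁ (2 * ψ (inputNorm u)) := by
        rcases le_total (φ (Metric.infDist ξ A)) (ψ (inputNorm u)) with hh | hh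
        · have := hK_mono h1 (add_nonneg a0 b0)
            (show φ (Metric.infDist ξ A) + ψ (inputNorm u) ≤ 2 * ψ (inputNorm u) by linarith)
          linarith
        · have := hK_mono h1 (add_nonneg a0 b0)
            (show φ (Metric.infDist ξ A) + ψ (inputNorm u) ≤ 2 * φ (Metric.infDist ξ A) by linarith)
          linarith
      simp only [traj]; linarith
    · have := h ξ u hu j hj'
      linarith

end TrajSec

/-- Existence of a finite-step ISS Lyapunov function implies ISS. -/
theorem stmt8
    [∀ i, NormedSpace ℝ (E i)] [∀ i, FiniteDimensional ℝ (E i)] [∀ i, Nontrivial (E i)]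
    [∀ i, NormedSpace ℝ (P i)] [∀ i, FiniteDimensional ℝ (P i)] [∀ i, Nontrivial (P i)]
    (F : lp E ⊤ → lp P ⊤ → lp E ⊤)
    (A : Set (lp E ⊤)) (hAne : A.Nonempty) (hAcl : IsClosed A)
    (hKb : KBounded F A)
    (V : lp E ⊤ → ℝ) (hVcont : Continuous V) (hVnonneg : ∀ ξ, 0 ≤ V ξ)
    (M : ℕ) (hM : 0 < M)
    (ωl ωu α : ℝ → ℝ) (hωl : ClassKinf ωl) (hωu : ClassKinf ωu)
    (hα : ClassKinf α) (hαid : ∀ s : ℝ, 0 < s → α s < s)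
    (γ : ℝ → ℝ) (hγ : ClassK γ)
    (hsandwich : ∀ ξ : lp E ⊤,
      ωl (Metric.infDist ξ A) ≤ V ξ ∧ V ξ ≤ ωu (Metric.infDist ξ A))
    (hdecay : ∀ (ξ : lp E ⊤) (u : ℕ → lp P ⊤), AdmInput u →
      V (traj F ξ u M) ≤ max (α (V ξ)) (γ (inputNorm u))) :
    ISS F A := by
  obtain ⟨φ, ψ, hφ, hψ, hshort⟩ := short_bd F A hKb M
  obtain ⟨e, he⟩ := hKinf_iso hα
  obtain ⟨l, hl⟩ := hKinf_iso hωl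
  have e0 : e 0 = 0 := by rw [he 0 le_rfl, hα.1.2.2]
  have l0 : l 0 = 0 := by rw [hl 0 le_rfl, hωl.1.2.2]
  have es0 : e.symm 0 = 0 := by rw [e.symm_apply_eq, e0]
  have ls0 : l.symm 0 = 0 := by rw [l.symm_apply_eq, l0]
  have hlt : ∀ s, 0 < s → e s < s := fun s hs => by rw [he s hs.le]; exact hαid s hs
  have hle : ∀ s, 0 ≤ s → e s ≤ s := fun s hs => by
    rcases hs.lt_or_eq with h | h
    · exact (hlt s h).le
    · rw [← h, e0]
  have hls := hK_iso l.symm ls0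
  have hG := hK_two (hK_comp hφ hls)
  have hw := hK_comp (hK_iso e.symm es0) hωu.1
  have hMpos : (0 : ℝ) < M := Nat.cast_pos.2 hM
  refine ⟨_, _, hKL e e0 hlt hG hw hMpos,
    hK_add (hK_two (hK_comp hφ (hK_comp hls hγ))) (hK_two hψ), ?_⟩
  intro ξ u hu n
  have hU := input_nonneg u
  have hd : 0 ≤ Metric.infDist ξ A := Metric.infDist_nonneg
  have hγ0 := hK_nonneg hγ hU
  have hu0 := hK_nonneg hωu.1 hd
  have hV : ∀ k : ℕ, V (traj F ξ u (M * k)) ≤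
      max (e^[k] (ωu (Metric.infDist ξ A))) (γ (inputNorm u)) := by
    intro k
    induction k with
    | zero => exact le_max_of_le_left (hsandwich ξ).2
    | succ k ih =>
      rw [Nat.mul_succ, traj_add']
      refine (hdecay _ _ (adm_shift hu _)).trans (max_le ?_ ?_)
      · rw [← he _ (hVnonneg _)]
        refine (e.monotone ih).trans ?_
        rw [e.monotone.map_max, Function.iterate_succ_apply']
        exact max_le_max le_rfl (hle _ hγ0)
      · exact le_max_of_le_right (hK_mono hγ (input_nonneg _) (input_shift hu _))
  set k := n / M with hk
  have hn : n = M * k + n % M := (Nat.div_add_mod n M).symm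
  have hs := hshort (traj F ξ u (M * k)) _ (adm_shift hu (M * k)) (n % M) (Nat.mod_lt n hM).le
  rw [← traj_add', ← hn] at hs
  have hs2 := hK_mono hψ (input_nonneg _) (input_shift hu (M * k))
  have hdk : Metric.infDist (traj F ξ u (M * k)) A ≤
      max (l.symm (e^[k] (ωu (Metric.infDist ξ A)))) (l.symm (γ (inputNorm u))) := by
    rw [← l.symm.monotone.map_max, ← OrderIso.symm_apply_apply l (Metric.infDist _ A)]
    apply l.symm.monotone
    rw [hl _ Metric.infDist_nonneg]
    exact (hsandwich _).1.trans (hV k)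
  have hBge : e^[k] (ωu (Metric.infDist ξ A)) ≤
      hB e (e.symm (ωu (Metric.infDist ξ A))) ((n : ℝ) / M) := by
    have hfl : ⌊(n : ℝ) / M⌋₊ = k := Nat.floor_div_eq_div n M
    have hnn := div_nonneg (Nat.cast_nonneg (α := ℝ) n) hMpos.le
    rcases hu0.lt_or_eq with h | h
    · have hp : 0 < e.symm (ωu (Metric.infDist ξ A)) := by
        have := e.symm.strictMono h; rwa [es0] at this
      have := hB_gt e e0 hlt hp hnn
      rw [hfl, Function.iterate_succ_apply, e.apply_symm_apply] at this
      exact this.le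
    · rw [← h, es0, hB_zero e e0, it_zero e e0]
  have hek : 0 ≤ e^[k] (ωu (Metric.infDist ξ A)) := by
    have := (it_mono e k).monotone hu0; rwa [it_zero e e0] at this
  have hψ0 := hK_nonneg hψ hU
  have hlγ := hK_nonneg hls hγ0
  have hφγ := hK_nonneg hφ hlγ
  have hψs := hK_nonneg hψ (input_nonneg (fun i => u (M * k + i)))
  have hφd := hK_mono hφ Metric.infDist_nonneg hdk
  have hlB := hK_mono hφ (hK_nonneg hls hek) (hK_mono hls hek hBge)
  rcases le_total (l.symm (e^[k] (ωu (Metric.infDist ξ A)))) (l.symm (γ (inputNorm u))) with h | h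
  · rw [max_eq_right h] at hφd
    apply le_max_of_le_right
    linarith
  · rw [max_eq_left h] at hφd
    rcases le_total (ψ (inputNorm u)) (φ (l.symm (e^[k] (ωu (Metric.infDist ξ A))))) with h' | h'
    · apply le_max_of_le_left
      linarith
    · apply le_max_of_le_right
      linarith

end System
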